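/- There exists a universal constant C > 0 such that for every integer n ≥ 2 and every skew-symmetric n × n real matrix W (i.e., W(u,v) = −W(v,u) for all u, v), one has ∑_{1 ≤ u < v ≤ n} W(u,v) ≤ C · (log n) · ‖W‖_cut. -/

import Mathlib

/-- The cut norm of an `n × n` real matrix. -/
noncomputable def cutNorm {n : ℕ} (W : Matrix (Fin n) (Fin n) ℝ) : ℝ :=
  sSup {x : ℝ | ∃ S T : Finset (Fin n), x = |∑ u ∈ S, ∑ v ∈ T, W u v|}

/-!
Write `u` and `v` in binary: `u < v` exactly when, for a unique `k`, the two numbers agree after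
their last `k + 1` digits are dropped, while digit `k` is `0` in `u` and `1` in `v`. For fixed `k`
these pairs are the diagonal blocks of a partition of (rows with digit `0`) × (columns with
digit `1`), and there are only about `log₂ n` values of `k`.

A sum over diagonal blocks is at most four times the cut norm, however many blocks there are:
multiply all entries in block `(i, j)` by `εᵢ εⱼ` for random signs `ε`. The expectation is the sum
over the diagonal blocks, while each choice of signs gives a combination of four cuts with
coefficients `±1`.
-/

section SignVec

variable {R ι : Type*} [Ring R] [DecidableEq ι]

/-- The vector of signs that is `1` on `A` and `-1` off `A`. Letting `A` range over the subsets of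
a finite set, all equally likely, encodes independent uniformly random signs. -/
def signVec (A : Finset ι) (i : ι) : R :=
  if i ∈ A then 1 else -1

theorem signVec_mul_self (A : Finset ι) (i : ι) : signVec A i * signVec A i = (1 : R) := by
  unfold signVec
  split_ifs <;> simp

theorem sum_signVec_mul {α : Type*} (A : Finset ι) (S : Finset α) (f : α → ι) (x : α → R) :
    ∑ u ∈ S, signVec A (f u) * x u =
      ∑ u ∈ S with f u ∈ A, x u - ∑ u ∈ S with f u ∉ A, x u := by
  simp only [signVec, ite_mul, one_mul, neg_one_mul, Finset.sum_ite, Finset.sum_neg_distrib,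
    sub_eq_add_neg]

theorem sum_powerset_signVec_mul_signVec_of_ne {J : Finset ι} {i j : ι} (hi : i ∈ J)
    (hij : i ≠ j) : ∑ A ∈ J.powerset, signVec A i * signVec A j = (0 : R) := by
  rw [← Finset.insert_erase hi, Finset.sum_powerset_insert (Finset.notMem_erase i J),
    ← Finset.sum_add_distrib]
  refine Finset.sum_eq_zero fun A hA => ?_
  have hiA : i ∉ A := fun h => Finset.notMem_erase i J (Finset.mem_powerset.1 hA h)
  have sign_i : signVec A i = (-1 : R) := if_neg hiA
  have sign_insert_i : signVec (insert i A) i = (1 : R) := if_pos (Finset.mem_insert_self i A)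
  have sign_insert_j : signVec (insert i A) j = (signVec A j : R) := by
    simp [signVec, hij.symm]
  rw [sign_i, sign_insert_i, sign_insert_j, neg_one_mul, one_mul, neg_add_cancel]

theorem sum_powerset_signVec_mul_signVec {J : Finset ι} {i : ι} (hi : i ∈ J) (j : ι) :
    ∑ A ∈ J.powerset, signVec A i * signVec A j = if i = j then (2 : R) ^ J.card else 0 := by
  split_ifs with hij
  · simp [hij, signVec_mul_self]
  · exact sum_powerset_signVec_mul_signVec_of_ne hi hij

theorem sum_powerset_sum_signVec_mul {α β : Type*} (W : Matrix α β R) (S : Finset α)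
    (T : Finset β) (f : α → ι) (g : β → ι) :
    ∑ A ∈ (S.image f).powerset, ∑ u ∈ S, signVec A (f u) * ∑ v ∈ T, signVec A (g v) * W u v =
      2 ^ (S.image f).card * ∑ u ∈ S, ∑ v ∈ T with f u = g v, W u v := by
  rw [Finset.sum_comm, Finset.mul_sum]
  refine Finset.sum_congr rfl fun u hu => ?_
  simp only [Finset.mul_sum, Finset.sum_filter, ← mul_assoc]
  rw [Finset.sum_comm]
  refine Finset.sum_congr rfl fun v _ => ?_
  rw [← Finset.sum_mul, sum_powerset_signVec_mul_signVec (Finset.mem_image_of_mem f hu)]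
  split_ifs <;> simp

end SignVec

theorem sum_filter_lt_eq_sum_filter_half_lt_add {R α β : Type*} [AddCommMonoid R]
    (W : Matrix α β R) (S : Finset α) (T : Finset β) (f : α → ℕ) (g : β → ℕ) :
    ∑ u ∈ S, ∑ v ∈ T with f u < g v, W u v =
      ∑ u ∈ S, ∑ v ∈ T with f u / 2 < g v / 2, W u v +
        ∑ u ∈ S with f u % 2 = 0, ∑ v ∈ {v ∈ T | g v % 2 = 1} with f u / 2 = g v / 2, W u v := by
  rw [Finset.sum_filter (fun u => f u % 2 = 0), ← Finset.sum_add_distrib]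
  refine Finset.sum_congr rfl fun u _ => ?_
  simp only [Finset.sum_filter]
  rw [← Finset.sum_const_zero (s := T), ← Finset.sum_ite_irrel, ← Finset.sum_add_distrib]
  refine Finset.sum_congr rfl fun v _ => ?_
  split_ifs <;> first | omega | simp

section IsCutBound

variable {R α β : Type*}

/-- `c` is an upper bound for the cut norm of the matrix `W`, whose rows and columns may be indexed
by arbitrary types. -/
def IsCutBound [AddCommGroup R] [LinearOrder R] (W : Matrix α β R) (c : R) : Prop :=
  ∀ (S : Finset α) (T : Finset β), |∑ u ∈ S, ∑ v ∈ T, W u v| ≤ c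

namespace IsCutBound

variable [CommRing R] [LinearOrder R] [IsStrictOrderedRing R] {ι : Type*} [DecidableEq ι]
  {W : Matrix α β R} {c : R}

theorem abs_sum_signVec_mul_le (hW : IsCutBound W c) (A : Finset ι) (S : Finset α) (T : Finset β)
    (f : α → ι) (g : β → ι) :
    |∑ u ∈ S, signVec A (f u) * ∑ v ∈ T, signVec A (g v) * W u v| ≤ 4 * c := by
  simp only [sum_signVec_mul, Finset.sum_sub_distrib]
  have cut (S : Finset α) (T : Finset β) := abs_le.1 (hW S T)
  have cut₁ := cut {u ∈ S | f u ∈ A} {v ∈ T | g v ∈ A}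
  have cut₂ := cut {u ∈ S | f u ∈ A} {v ∈ T | g v ∉ A}
  have cut₃ := cut {u ∈ S | f u ∉ A} {v ∈ T | g v ∈ A}
  have cut₄ := cut {u ∈ S | f u ∉ A} {v ∈ T | g v ∉ A}
  rw [abs_le]
  constructor <;> linarith

theorem abs_sum_filter_eq_le (hW : IsCutBound W c) (S : Finset α) (T : Finset β)
    (f : α → ι) (g : β → ι) :
    |∑ u ∈ S, ∑ v ∈ T with f u = g v, W u v| ≤ 4 * c := by
  have two_pow_pos : (0 : R) < 2 ^ (S.image f).card := by positivity
  refine le_of_mul_le_mul_left ?_ two_pow_pos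
  calc 2 ^ (S.image f).card * |∑ u ∈ S, ∑ v ∈ T with f u = g v, W u v|
      = |∑ A ∈ (S.image f).powerset,
          ∑ u ∈ S, signVec A (f u) * ∑ v ∈ T, signVec A (g v) * W u v| := by
        rw [sum_powerset_sum_signVec_mul, abs_mul, abs_of_pos two_pow_pos]
    _ ≤ ∑ A ∈ (S.image f).powerset,
          |∑ u ∈ S, signVec A (f u) * ∑ v ∈ T, signVec A (g v) * W u v| :=
        Finset.abs_sum_le_sum_abs _ _
    _ ≤ (S.image f).powerset.card • (4 * c) :=
        Finset.sum_le_card_nsmul _ _ _ fun A _ => hW.abs_sum_signVec_mul_le A S T f g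
    _ = 2 ^ (S.image f).card * (4 * c) := by
        simp [Finset.card_powerset]

theorem abs_sum_filter_lt_le (hW : IsCutBound W c) (S : Finset α) (T : Finset β) (k : ℕ)
    {f : α → ℕ} {g : β → ℕ} (hg : ∀ v ∈ T, g v < 2 ^ k) :
    |∑ u ∈ S, ∑ v ∈ T with f u < g v, W u v| ≤ k * (4 * c) := by
  induction k generalizing f g with
  | zero =>
    have filter_empty (u : α) : {v ∈ T | f u < g v} = ∅ :=
      Finset.filter_eq_empty_iff.2 fun v hv => by have := hg v hv; omega
    simp [filter_empty]
  | succ k ih =>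
    have half_lt : ∀ v ∈ T, g v / 2 < 2 ^ k := fun v hv => by
      have := hg v hv
      omega
    rw [sum_filter_lt_eq_sum_filter_half_lt_add]
    calc _ ≤ k * (4 * c) + 4 * c :=
          (abs_add_le _ _).trans (add_le_add (ih half_lt) (hW.abs_sum_filter_eq_le _ _ _ _))
      _ = (k + 1 : ℕ) * (4 * c) := by push_cast; ring

end IsCutBound

end IsCutBound

theorem isCutBound_cutNorm {n : ℕ} (W : Matrix (Fin n) (Fin n) ℝ) :
    IsCutBound W (cutNorm W) := by
  refine fun S T => le_csSup (Set.Finite.bddAbove ?_) ⟨S, T, rfl⟩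
  refine (Set.finite_range fun P : Finset (Fin n) × Finset (Fin n) =>
    |∑ u ∈ P.1, ∑ v ∈ P.2, W u v|).subset ?_
  rintro _ ⟨S, T, rfl⟩
  exact ⟨(S, T), rfl⟩

theorem cutNorm_nonneg {n : ℕ} (W : Matrix (Fin n) (Fin n) ℝ) : 0 ≤ cutNorm W :=
  (abs_nonneg _).trans (isCutBound_cutNorm W ∅ ∅)

theorem clog_two_le_two_mul_logb {n : ℕ} (hn : n ≠ 0) :
    (Nat.clog 2 n : ℝ) ≤ 2 * Real.logb 2 n := by
  obtain rfl | one_lt : n = 1 ∨ 1 < n := by omega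
  · simp
  have one_le_logb : 1 ≤ Real.logb 2 n := by
    rw [Real.le_logb_iff_rpow_le one_lt_two (by positivity), Real.rpow_one]
    exact_mod_cast one_lt
  have ceil_logb : ⌈Real.logb 2 n⌉₊ = Nat.clog 2 n := by
    exact_mod_cast Real.natCeil_logb_natCast 2 n
  rw [← ceil_logb]
  exact Nat.ceil_le_two_mul (by linarith)

theorem upperTriangular_sum_le_log_mul_cutNorm_general {n : ℕ} (hn : n ≠ 0)
    (W : Matrix (Fin n) (Fin n) ℝ) :
    |∑ p ∈ Finset.univ.filter (fun p : Fin n × Fin n => p.1 < p.2), W p.1 p.2| ≤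
      8 / Real.log 2 * Real.log n * cutNorm W := by
  have val_lt (v : Fin n) : (v : ℕ) < 2 ^ Nat.clog 2 n :=
    v.isLt.trans_le (Nat.le_pow_clog one_lt_two n)
  calc |∑ p ∈ Finset.univ.filter (fun p : Fin n × Fin n => p.1 < p.2), W p.1 p.2|
      = |∑ u : Fin n, ∑ v : Fin n with u.val < v.val, W u v| := by
        simp only [Finset.sum_filter, Fintype.sum_prod_type, Fin.lt_def]
    _ ≤ Nat.clog 2 n * (4 * cutNorm W) :=
        (isCutBound_cutNorm W).abs_sum_filter_lt_le _ _ _ fun v _ => val_lt v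
    _ ≤ 2 * Real.logb 2 n * (4 * cutNorm W) :=
        mul_le_mul_of_nonneg_right (clog_two_le_two_mul_logb hn)
          (mul_nonneg zero_le_four (cutNorm_nonneg W))
    _ = 8 / Real.log 2 * Real.log n * cutNorm W := by
        rw [Real.logb]
        ring

/-- There is a universal constant `C > 0` such that for every `n ≥ 2` and every
skew-symmetric `n × n` real matrix `W`, the sum of the above-diagonal entries of `W` is at
most `C · (log n) · ‖W‖_cut`. -/
theorem upperTriangular_sum_le_log_mul_cutNorm :
    ∃ C : ℝ, 0 < C ∧ ∀ n : ℕ, 2 ≤ n → ∀ W : Matrix (Fin n) (Fin n) ℝ,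
      (∀ u v, W u v = -W v u) →
      ∑ p ∈ Finset.univ.filter (fun p : Fin n × Fin n => p.1 < p.2), W p.1 p.2 ≤
        C * Real.log n * cutNorm W :=
  ⟨8 / Real.log 2, by positivity, fun _ hn W _ =>
    (le_abs_self _).trans (upperTriangular_sum_le_log_mul_cutNorm_general (by omega) W)⟩
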